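/- Let θ₄(q) = Σ_{n∈ℤ} (−1)^n q^{n²} and E(q) = (q;q)_∞. Then U_{5,4}( θ₄(q) E(q) ) = 2 J_5 J_{5,2} J_{10,1} / J_{5,1}, where the J-products are in the variable q. -/

import Mathlib

/-!
Squares are `0, 1, 4` and pentagonal numbers are `0, 1, 2` modulo `5`. Hence in the double series
`θ₄(x) E(x) = ∑ (-1)^{n+m} x^{n² + m(3m-1)/2}` (Euler's pentagonal number theorem) an exponent
`≡ 4 (mod 5)` arises only as `4 + 0`, and the part of the series with these exponents is a product of
two single series (`tsum_mod_four_eq_mul`). With `q = x⁵`: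

* the terms of `θ₄(x)` with `n² ≡ 4`, that is `n ≡ ±2`, give `2 x⁴ J_{10,1}(q)` by the Jacobi triple
  product (`theta4_part`);
* the terms of `E(x)` with pentagonal exponent `≡ 0`, that is `m ≡ 0, 2`, form a quintuple product
  (`euler_part`), which equals `J_5 J_{5,2} / J_{5,1}` (`quintuple_mul_J51`).

The Jacobi triple product (`jacobi_triple`) is the limit, by dominated convergence, of a finite form
of the q-binomial theorem. The quintuple product (`quintuple`) follows by multiplying two triple
products and collecting powers of `z` modulo `3`.

The residue class is extracted by averaging over fifth roots of unity (`sum_rootsOfUnity_tsum`). This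
needs the series `∑ a(n) q^n` to converge, which the hypothesis, an equation between values of `∑'`,
does not assert directly; it holds because `θ₄ E` does not vanish on `(0, 1)`, while a divergent
series has value `0` (`summable_coeff`). The argument divides by powers of `x`, so `q = 0` is treated
by continuity.
-/

/-- The q-Pochhammer symbol `(a;q)_∞ = ∏_{k≥0} (1 - a q^k)`. -/
noncomputable def qPochInf (a q : ℂ) : ℂ := ∏' k : ℕ, (1 - a * q ^ k)

/-- `Jba b a q` is `J_{b,a} = j(q^a;q^b) = (q^a;q^b)_∞ (q^{b-a};q^b)_∞ (q^b;q^b)_∞`. -/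
noncomputable def Jba (b a : ℕ) (q : ℂ) : ℂ :=
  qPochInf (q ^ a) (q ^ b) * qPochInf (q ^ (b - a)) (q ^ b) * qPochInf (q ^ b) (q ^ b)

/-- `Jb b q` is `J_b = (q^b;q^b)_∞`. -/
noncomputable def Jb (b : ℕ) (q : ℂ) : ℂ := qPochInf (q ^ b) (q ^ b)

/-- The theta function θ₄(q) = Σ_{n∈ℤ} (−1)^n q^{n²}. -/
noncomputable def theta4 (q : ℂ) : ℂ := ∑' n : ℤ, (-1 : ℂ) ^ n * q ^ (n ^ 2)

open Filter Topology Finset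

/-! ### Infinite q-products -/

lemma norm_pow_lt_one {q : ℂ} (hq : ‖q‖ < 1) {n : ℕ} (hn : n ≠ 0) : ‖q ^ n‖ < 1 := by
  rw [norm_pow]; exact pow_lt_one₀ (norm_nonneg _) hq hn

lemma summable_norm_qPoch (a : ℂ) {q : ℂ} (hq : ‖q‖ < 1) :
    Summable fun k : ℕ => ‖-(a * q ^ k)‖ := by
  simp only [norm_neg, norm_mul, norm_pow]
  exact (summable_geometric_of_lt_one (norm_nonneg _) hq).mul_left _

lemma multipliable_qPoch (a : ℂ) {q : ℂ} (hq : ‖q‖ < 1) :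
    Multipliable fun k : ℕ => 1 - a * q ^ k := by
  simpa [sub_eq_add_neg] using multipliable_one_add_of_summable (summable_norm_qPoch a hq)

lemma tendsto_qPoch (a : ℂ) {q : ℂ} (hq : ‖q‖ < 1) :
    Tendsto (fun n : ℕ => ∏ k ∈ range n, (1 - a * q ^ k)) atTop (𝓝 (qPochInf a q)) :=
  (multipliable_qPoch a hq).hasProd.tendsto_prod_nat

lemma qPochInf_ne_zero {a q : ℂ} (hq : ‖q‖ < 1) (ha : ‖a‖ < 1) : qPochInf a q ≠ 0 := by
  have h := tprod_one_add_ne_zero_of_summable (f := fun k : ℕ => -(a * q ^ k)) (fun k => ?_)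
    (summable_norm_qPoch a hq)
  · simpa [qPochInf, sub_eq_add_neg] using h
  · intro h0
    have h1 : a * q ^ k = 1 := by linear_combination -h0
    have h2 : ‖a * q ^ k‖ < 1 := by
      rw [norm_mul, norm_pow]
      exact mul_lt_one_of_nonneg_of_lt_one_left (norm_nonneg _) ha
        (pow_le_one₀ (norm_nonneg _) hq.le)
    rw [h1, norm_one] at h2
    exact lt_irrefl _ h2

/-- `(a;q)_∞ (-a;q)_∞ = (a²;q²)_∞`. -/
lemma qPochInf_mul_neg (a : ℂ) {q : ℂ} (hq : ‖q‖ < 1) :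
    qPochInf a q * qPochInf (-a) q = qPochInf (a ^ 2) (q ^ 2) := by
  unfold qPochInf
  rw [← (multipliable_qPoch a hq).tprod_mul (multipliable_qPoch (-a) hq)]
  congr 1; ext k; ring

/-- Splitting a q-product by the parity of the index. -/
lemma qPochInf_even_odd (a : ℂ) {q : ℂ} (hq : ‖q‖ < 1) :
    qPochInf a (q ^ 2) * qPochInf (a * q) (q ^ 2) = qPochInf a q := by
  have hq2 := norm_pow_lt_one hq two_ne_zero
  unfold qPochInf
  rw [← tprod_even_mul_odd (f := fun k : ℕ => 1 - a * q ^ k)]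
  · congr 2 <;> ext k <;> ring
  · convert multipliable_qPoch a hq2 using 2; ring
  · convert multipliable_qPoch (a * q) hq2 using 2; ring

/-- Splitting a q-product by the residue of the index modulo `3`. -/
lemma qPochInf_mod_three (a : ℂ) {q : ℂ} (hq : ‖q‖ < 1) :
    qPochInf a (q ^ 3) * qPochInf (a * q) (q ^ 3) * qPochInf (a * q ^ 2) (q ^ 3)
      = qPochInf a q := by
  have hq3 := norm_pow_lt_one hq three_ne_zero
  have h1 := ((tendsto_qPoch a hq3).mul (tendsto_qPoch (a * q) hq3)).mul
    (tendsto_qPoch (a * q ^ 2) hq3)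
  have h2 := (tendsto_qPoch a hq).comp
    (tendsto_id.const_mul_atTop' (show 0 < 3 by norm_num))
  refine tendsto_nhds_unique h1 (h2.congr fun n => ?_)
  simp only [Function.comp, id]
  induction n with
  | zero => simp
  | succ n ih =>
    rw [mul_add, mul_one, prod_range_succ, prod_range_succ, prod_range_succ, ih,
      prod_range_succ, prod_range_succ, prod_range_succ]
    ring

/-! ### The Jacobi triple product -/

/-- The finite product `(q;q)_n = ∏_{i<n} (1 - q^{i+1})`. -/
def qFac (q : ℂ) (n : ℕ) : ℂ := ∏ k ∈ range n, (1 - q * q ^ k)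

lemma qFac_succ (q : ℂ) (n : ℕ) : qFac q (n + 1) = qFac q n * (1 - q ^ (n + 1)) := by
  rw [qFac, prod_range_succ, ← pow_succ']; rfl

lemma one_sub_pow_ne_zero {q : ℂ} (hq : ‖q‖ < 1) (n : ℕ) : 1 - q ^ (n + 1) ≠ 0 := by
  intro h
  have h2 := norm_pow_lt_one hq (Nat.succ_ne_zero n)
  rw [Nat.succ_eq_add_one, ← sub_eq_zero.mp h, norm_one] at h2
  exact lt_irrefl _ h2

lemma qFac_ne_zero {q : ℂ} (hq : ‖q‖ < 1) (n : ℕ) : qFac q n ≠ 0 :=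
  prod_ne_zero_iff.mpr fun k _ => by rw [← pow_succ']; exact one_sub_pow_ne_zero hq k

/-- The summand of the q-binomial theorem for `∏_{i<N} (1 + x y^{2i+1})`: the q-binomial
coefficient `[N choose j]` in base `y²` times `y^{j²} x^j`, extended by zero to `j > N`. -/
noncomputable def qBinTerm (y x : ℂ) (N j : ℕ) : ℂ :=
  if j ≤ N then qFac (y ^ 2) N / (qFac (y ^ 2) j * qFac (y ^ 2) (N - j)) * y ^ (j * j) * x ^ j
  else 0

lemma qBinTerm_zero {y : ℂ} (hy : ‖y‖ < 1) (x : ℂ) (N : ℕ) : qBinTerm y x N 0 = 1 := by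
  have := qFac_ne_zero (norm_pow_lt_one hy two_ne_zero) N
  have h0 : qFac (y ^ 2) 0 = 1 := by simp [qFac]
  simp [qBinTerm, h0, this]

/-- The q-Pascal rule. -/
lemma qBinTerm_succ {y : ℂ} (hy : ‖y‖ < 1) (x : ℂ) (N j : ℕ) :
    qBinTerm y x (N + 1) (j + 1)
      = qBinTerm y x N (j + 1) + x * y ^ (2 * N + 1) * qBinTerm y x N j := by
  have hy2 := norm_pow_lt_one hy two_ne_zero
  have h0 : qFac (y ^ 2) 0 = 1 := by simp [qFac]
  rcases lt_trichotomy j N with h | rfl | h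
  · obtain ⟨m, rfl⟩ := Nat.exists_eq_add_of_lt h
    have e1 : j + m + 1 + 1 - (j + 1) = m + 1 := by omega
    have e2 : j + m + 1 - (j + 1) = m := by omega
    have e3 : j + m + 1 - j = m + 1 := by omega
    rw [qBinTerm, qBinTerm, qBinTerm, if_pos (by omega), if_pos (by omega), if_pos (by omega),
      e1, e2, e3, qFac_succ _ (j + m + 1), qFac_succ _ m, qFac_succ _ j]
    have := qFac_ne_zero hy2 m
    have := qFac_ne_zero hy2 j
    have := one_sub_pow_ne_zero hy2 m
    have := one_sub_pow_ne_zero hy2 j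
    field_simp
    ring
  · rw [qBinTerm, qBinTerm, qBinTerm, if_pos (by omega), if_neg (by omega), if_pos le_rfl,
      Nat.sub_self, Nat.sub_self, h0]
    have := qFac_ne_zero hy2 j
    have := qFac_ne_zero hy2 (j + 1)
    field_simp
    ring
  · rw [qBinTerm, qBinTerm, qBinTerm, if_neg (by omega), if_neg (by omega), if_neg (by omega)]
    simp

/-- The finite q-binomial theorem. -/
lemma prod_eq_sum_qBinTerm {y : ℂ} (hy : ‖y‖ < 1) (x : ℂ) (N : ℕ) :
    ∏ i ∈ range N, (1 + x * y ^ (2 * i + 1)) = ∑ j ∈ range (N + 1), qBinTerm y x N j := by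
  induction N with
  | zero => simp [qBinTerm_zero hy]
  | succ N ih =>
    rw [prod_range_succ, ih, sum_range_succ' _ (N + 1)]
    simp only [qBinTerm_succ hy, sum_add_distrib, ← mul_sum, qBinTerm_zero hy]
    have h : ∑ j ∈ range (N + 1), qBinTerm y x N j
        = ∑ j ∈ range (N + 1), qBinTerm y x N (j + 1) + 1 := by
      have h1 := sum_range_succ' (qBinTerm y x N) (N + 1)
      have h2 : qBinTerm y x N (N + 1) = 0 := by simp [qBinTerm]
      rw [sum_range_succ, h2, add_zero, qBinTerm_zero hy] at h1
      exact h1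
    linear_combination h

/-- The summand of the finite Jacobi triple product of order `n`: the q-binomial coefficient
`[2n choose n+k]` in base `y²` times `y^{k²} v^k`, extended by zero to `|k| > n`. -/
noncomputable def jtpTerm (y v : ℂ) (n : ℕ) (k : ℤ) : ℂ :=
  if -(n : ℤ) ≤ k ∧ k ≤ n then
    qFac (y ^ 2) (2 * n) / (qFac (y ^ 2) (n + k).toNat * qFac (y ^ 2) (n - k).toNat)
      * (y ^ (k ^ 2) * v ^ k)
  else 0

/-- The finite Jacobi triple product: the q-binomial theorem with `N = 2n` and `x = v y^{-2n}`, where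
the first `n` factors of the product are inverted and the summation index is centred. -/
lemma finite_jtp {y v : ℂ} (hy0 : y ≠ 0) (hy : ‖y‖ < 1) (hv : v ≠ 0) (n : ℕ) :
    (∏ i ∈ range n, (1 - -(y * v) * (y ^ 2) ^ i)) * ∏ i ∈ range n, (1 - -(y / v) * (y ^ 2) ^ i)
      = ∑' k : ℤ, jtpTerm y v n k := by
  have hL := prod_eq_sum_qBinTerm hy (v * y ^ (-(2 * n : ℤ))) (2 * n)
  rw [two_mul n, prod_range_add, ← two_mul] at hL
  have hP1 : ∏ i ∈ range n, (1 + v * y ^ (-(2 * n : ℤ)) * y ^ (2 * (n + i) + 1))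
      = ∏ i ∈ range n, (1 - -(y * v) * (y ^ 2) ^ i) := by
    refine prod_congr rfl fun i _ => ?_
    have : y ^ (-(2 * n : ℤ)) * y ^ (2 * (n + i) + 1) = y * (y ^ 2) ^ i := by
      rw [← pow_mul, ← pow_succ', ← zpow_natCast, ← zpow_natCast, ← zpow_add₀ hy0]
      congr 1; push_cast; ring
    linear_combination v * this
  have hP2 : (v⁻¹) ^ n * y ^ (n * n) *
      ∏ i ∈ range n, (1 + v * y ^ (-(2 * n : ℤ)) * y ^ (2 * i + 1))
      = ∏ i ∈ range n, (1 - -(y / v) * (y ^ 2) ^ i) := by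
    have hodd : ∀ m : ℕ, ∏ i ∈ range m, (v⁻¹ * y ^ (2 * i + 1)) = (v⁻¹) ^ m * y ^ (m * m) := by
      intro m
      induction m with
      | zero => simp
      | succ m ih => rw [prod_range_succ, ih]; ring
    rw [← hodd, ← prod_range_reflect (fun i => 1 + v * y ^ (-(2 * n : ℤ)) * y ^ (2 * i + 1)),
      ← prod_mul_distrib]
    refine prod_congr rfl fun i hi => ?_
    have hi' := mem_range.mp hi
    have : y ^ (2 * i + 1) * (y ^ (-(2 * n : ℤ)) * y ^ (2 * (n - 1 - i) + 1)) = 1 := by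
      rw [← zpow_natCast, ← zpow_natCast, ← zpow_add₀ hy0, ← zpow_add₀ hy0]
      rw [← zpow_zero y]
      congr 1; push_cast [Nat.sub_sub, Nat.cast_sub (show 1 + i ≤ n by omega)]; ring
    have hvv : v⁻¹ * v = 1 := inv_mul_cancel₀ hv
    rw [← pow_mul]
    linear_combination (v⁻¹ * v) * this + hvv
  rw [hP1] at hL
  have hS : (v⁻¹) ^ n * y ^ (n * n) *
      ∑ j ∈ range (2 * n + 1), qBinTerm y (v * y ^ (-(2 * n : ℤ))) (2 * n) j
      = ∑' k : ℤ, jtpTerm y v n k := by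
    have hinj : Function.Injective fun j : ℕ => (j : ℤ) - n := fun a b h => by
      simpa using h
    rw [tsum_eq_sum (s := (range (2 * n + 1)).map ⟨_, hinj⟩), sum_map, mul_sum]
    · refine sum_congr rfl fun j hj => ?_
      have hj' := mem_range.mp hj
      simp only [Function.Embedding.coeFn_mk]
      rw [qBinTerm, if_pos (by omega), jtpTerm, if_pos (by omega)]
      have e1 : ((n : ℤ) + ((j : ℤ) - n)).toNat = j := by omega
      have e2 : ((n : ℤ) - ((j : ℤ) - n)).toNat = 2 * n - j := by omega
      rw [e1, e2]
      have e3 : (v⁻¹) ^ n * v ^ j = v ^ ((j : ℤ) - n) := by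
        rw [zpow_sub₀ hv, zpow_natCast, zpow_natCast, inv_pow]; field_simp
      have e4 : y ^ (n * n) * y ^ (j * j) * (y ^ (-(2 * n : ℤ))) ^ j
          = y ^ (((j : ℤ) - n) ^ 2) := by
        rw [← zpow_natCast, ← zpow_natCast, ← zpow_natCast, ← zpow_mul, ← zpow_add₀ hy0,
          ← zpow_add₀ hy0]
        congr 1; push_cast; ring
      rw [← e3, ← e4, mul_pow]; ring
    · intro k hk
      rw [jtpTerm, if_neg]
      rintro ⟨h1, h2⟩
      refine hk (mem_map.mpr ⟨(n + k).toNat, mem_range.mpr (by omega), ?_⟩)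
      simp only [Function.Embedding.coeFn_mk]; omega
  rw [← hS, ← hL, ← hP2]; ring

lemma summable_nat_gauss {r R : ℝ} (hr0 : 0 < r) (hr : r < 1) (hR : 0 < R) :
    Summable fun n : ℕ => r ^ (n * n) * R ^ n := by
  refine summable_of_ratio_test_tendsto_lt_one zero_lt_one
    (Eventually.of_forall fun n => by positivity) ?_
  have h : Tendsto (fun n : ℕ => (r * R) * (r ^ 2) ^ n) atTop (𝓝 ((r * R) * 0)) :=
    (tendsto_pow_atTop_nhds_zero_of_lt_one (by positivity)
      (pow_lt_one₀ hr0.le hr two_ne_zero)).const_mul _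
  rw [mul_zero] at h
  refine h.congr fun n => ?_
  rw [Real.norm_of_nonneg (by positivity), Real.norm_of_nonneg (by positivity)]
  field_simp
  ring

lemma summable_norm_theta {y v : ℂ} (hy0 : y ≠ 0) (hy : ‖y‖ < 1) (hv : v ≠ 0) :
    Summable fun k : ℤ => ‖y ^ (k ^ 2) * v ^ k‖ := by
  have hy0' := norm_pos_iff.mpr hy0
  have hv' := norm_pos_iff.mpr hv
  refine Summable.of_nat_of_neg ?_ ?_
  · refine (summable_nat_gauss hy0' hy hv').congr fun n => ?_
    rw [norm_mul, norm_zpow, norm_zpow, zpow_natCast]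
    congr 1; rw [← zpow_natCast]; congr 1; push_cast; ring
  · refine (summable_nat_gauss hy0' hy (inv_pos.mpr hv')).congr fun n => ?_
    rw [norm_mul, norm_zpow, norm_zpow, zpow_neg, zpow_natCast, inv_pow]
    congr 1; rw [← zpow_natCast]; congr 1; push_cast; ring

lemma tendsto_qFac {q : ℂ} (hq : ‖q‖ < 1) :
    Tendsto (qFac q) atTop (𝓝 (qPochInf q q)) := tendsto_qPoch q hq

/-- The q-binomial coefficients are bounded uniformly, since `(q;q)_n` is bounded and bounded
away from zero. -/
lemma exists_qFac_bound {q : ℂ} (hq : ‖q‖ < 1) :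
    ∃ C : ℝ, 0 ≤ C ∧ ∀ a b c : ℕ, ‖qFac q a / (qFac q b * qFac q c)‖ ≤ C := by
  obtain ⟨A, hA⟩ := (tendsto_qFac hq).norm.bddAbove_range
  obtain ⟨B, hB⟩ := ((tendsto_qFac hq).inv₀ (qPochInf_ne_zero hq hq)).norm.bddAbove_range
  have hA' : ∀ n, ‖qFac q n‖ ≤ A := fun n => hA ⟨n, rfl⟩
  have hB' : ∀ n, ‖(qFac q n)⁻¹‖ ≤ B := fun n => hB ⟨n, rfl⟩
  have hA0 : 0 ≤ A := (norm_nonneg _).trans (hA' 0)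
  have hB0 : 0 ≤ B := (norm_nonneg _).trans (hB' 0)
  refine ⟨A * (B * B), by positivity, fun a b c => ?_⟩
  rw [div_eq_mul_inv, mul_inv, norm_mul, norm_mul]
  gcongr
  exacts [hA' a, hB' b, hB' c]

/-- The Jacobi triple product in base `y²`, as the limit `n → ∞` of `finite_jtp` (the terms are
dominated by a constant multiple of `|y^{k²} v^k|`). The base is a square so that no half-integral
exponents occur when the identity is specialised. -/
theorem jacobi_triple {y v : ℂ} (hy0 : y ≠ 0) (hy : ‖y‖ < 1) (hv : v ≠ 0) :
    ∑' k : ℤ, y ^ (k ^ 2) * v ^ k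
      = qPochInf (-(y * v)) (y ^ 2) * qPochInf (-(y / v)) (y ^ 2) * qPochInf (y ^ 2) (y ^ 2) := by
  have hy2 := norm_pow_lt_one hy two_ne_zero
  have hE := qPochInf_ne_zero hy2 hy2
  obtain ⟨C, hC0, hC⟩ := exists_qFac_bound hy2
  have h1 := (tendsto_qPoch (-(y * v)) hy2).mul (tendsto_qPoch (-(y / v)) hy2)
  simp only [finite_jtp hy0 hy hv] at h1
  have h2 : Tendsto (fun n => ∑' k : ℤ, jtpTerm y v n k) atTop
      (𝓝 (∑' k : ℤ, (qPochInf (y ^ 2) (y ^ 2))⁻¹ * (y ^ (k ^ 2) * v ^ k))) := by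
    refine tendsto_tsum_of_dominated_convergence ((summable_norm_theta hy0 hy hv).mul_left C)
      (fun k => ?_) (Eventually.of_forall fun n k => ?_)
    · have hp : Tendsto (fun n : ℕ => ((n : ℤ) + k).toNat) atTop atTop :=
        tendsto_atTop.mpr fun b => by
          filter_upwards [eventually_ge_atTop (b + k.natAbs)] with n hn; omega
      have hm : Tendsto (fun n : ℕ => ((n : ℤ) - k).toNat) atTop atTop :=
        tendsto_atTop.mpr fun b => by
          filter_upwards [eventually_ge_atTop (b + k.natAbs)] with n hn; omega
      have h2n : Tendsto (fun n : ℕ => 2 * n) atTop atTop :=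
        tendsto_id.const_mul_atTop' (show 0 < 2 by norm_num)
      have ht := tendsto_qFac hy2
      have h3 := ((ht.comp h2n).div ((ht.comp hp).mul (ht.comp hm)) (mul_ne_zero hE hE)).mul_const
        (y ^ (k ^ 2) * v ^ k)
      have h4 : qPochInf (y ^ 2) (y ^ 2) / (qPochInf (y ^ 2) (y ^ 2) * qPochInf (y ^ 2) (y ^ 2))
          = (qPochInf (y ^ 2) (y ^ 2))⁻¹ := by field_simp
      rw [h4] at h3
      refine h3.congr' ?_
      filter_upwards [eventually_ge_atTop k.natAbs] with n hn
      rw [jtpTerm, if_pos (by omega)]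
      rfl
    · rw [jtpTerm]
      split_ifs
      · rw [norm_mul]
        exact mul_le_mul_of_nonneg_right (hC _ _ _) (norm_nonneg _)
      · rw [norm_zero]; positivity
  have h3 := tendsto_nhds_unique h1 h2
  rw [tsum_mul_left] at h3
  rw [h3]
  field_simp

/-! ### The pentagonal number theorem and the quintuple product -/

lemma tsum_int_residue (n : ℕ) [NeZero n] {g : ℤ → ℂ} (hg : Summable g) :
    ∑' N, g N = ∑ r : Fin n, ∑' k : ℤ, g (k * n + (r : ℕ)) := by
  rw [← (Int.divModEquiv n).symm.tsum_eq g, ← (Equiv.prodComm (Fin n) ℤ).tsum_eq]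
  have h : Summable fun p : Fin n × ℤ =>
      g ((Int.divModEquiv n).symm ((Equiv.prodComm (Fin n) ℤ) p)) :=
    ((Equiv.prodComm (Fin n) ℤ).trans (Int.divModEquiv n).symm).summable_iff.mpr hg
  rw [h.tsum_prod, tsum_fintype]
  rfl

lemma pentagonal_term {y : ℂ} (hy0 : y ≠ 0) (k : ℤ) :
    (y ^ 3) ^ (k ^ 2) * (-y⁻¹) ^ k = (-1) ^ k * y ^ (3 * k ^ 2 - k) := by
  rw [neg_eq_neg_one_mul y⁻¹, mul_zpow, inv_zpow', ← zpow_natCast, ← zpow_mul, mul_left_comm,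
    ← zpow_add₀ hy0]
  congr 2

lemma summable_norm_pentagonal {y : ℂ} (hy0 : y ≠ 0) (hy : ‖y‖ < 1) :
    Summable fun k : ℤ => ‖(-1) ^ k * y ^ (3 * k ^ 2 - k)‖ := by
  simp only [← pentagonal_term hy0]
  exact summable_norm_theta (pow_ne_zero 3 hy0) (norm_pow_lt_one hy three_ne_zero)
    (neg_ne_zero.mpr (inv_ne_zero hy0))

/-- Euler's pentagonal number theorem in base `y²`: the Jacobi triple product in base `y⁶`,
whose three factors interlace. -/
theorem pentagonal_theorem {y : ℂ} (hy0 : y ≠ 0) (hy : ‖y‖ < 1) :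
    ∑' k : ℤ, (-1) ^ k * y ^ (3 * k ^ 2 - k) = qPochInf (y ^ 2) (y ^ 2) := by
  have h := jacobi_triple (pow_ne_zero 3 hy0) (norm_pow_lt_one hy three_ne_zero)
    (neg_ne_zero.mpr (inv_ne_zero hy0))
  simp only [pentagonal_term hy0] at h
  rw [h, ← qPochInf_mod_three _ (norm_pow_lt_one hy two_ne_zero)]
  have e1 : -(y ^ 3 * -y⁻¹) = y ^ 2 := by field_simp
  have e2 : -(y ^ 3 / -y⁻¹) = y ^ 2 * y ^ 2 := by field_simp
  rw [e1, e2, show (y ^ 3) ^ 2 = (y ^ 2) ^ 3 by ring, show y ^ 2 * (y ^ 2) ^ 2 = (y ^ 2) ^ 3 by ring]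

lemma theta4_eq {q : ℂ} (hq0 : q ≠ 0) (hq : ‖q‖ < 1) :
    theta4 q = qPochInf q (q ^ 2) * qPochInf q (q ^ 2) * qPochInf (q ^ 2) (q ^ 2) := by
  have h := jacobi_triple hq0 hq (neg_ne_zero.mpr one_ne_zero)
  simp only [mul_neg, mul_one, neg_neg, div_neg, div_one] at h
  rw [← h, theta4]
  exact tsum_congr fun n => mul_comm _ _

lemma theta4_ne_zero {q : ℂ} (hq0 : q ≠ 0) (hq : ‖q‖ < 1) : theta4 q ≠ 0 := by
  have hq2 := norm_pow_lt_one hq two_ne_zero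
  rw [theta4_eq hq0 hq]
  exact mul_ne_zero (mul_ne_zero (qPochInf_ne_zero hq2 hq) (qPochInf_ne_zero hq2 hq))
    (qPochInf_ne_zero hq2 hq2)

lemma quintuple_term {y z : ℂ} (hy0 : y ≠ 0) (hz : z ≠ 0) (a b : ℤ) :
    y ^ (a ^ 2) * (z / y) ^ a * ((y ^ 2) ^ (b ^ 2) * (-z ^ 2) ^ b)
      = (-1) ^ b * y ^ (a ^ 2 - a + 2 * b ^ 2) * z ^ (a + 2 * b) := by
  rw [neg_eq_neg_one_mul, mul_zpow, div_zpow, zpow_add₀ hy0, zpow_sub₀ hy0, zpow_add₀ hz,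
    zpow_mul, zpow_mul, zpow_ofNat, zpow_ofNat]
  field_simp

/-- The reflection `l ↦ 1 - l` changes the sign of every term. -/
lemma tsum_odd_eq_zero {y : ℂ} :
    ∑' l : ℤ, (-1 : ℂ) ^ l * y ^ (6 * l ^ 2 - 6 * l) = 0 := by
  set T := ∑' l : ℤ, (-1 : ℂ) ^ l * y ^ (6 * l ^ 2 - 6 * l) with hT
  have h : T = -T := by
    conv_lhs => rw [hT, ← (Equiv.subLeft (1 : ℤ)).tsum_eq]
    rw [hT, ← tsum_neg]
    refine tsum_congr fun l => ?_
    simp only [Equiv.subLeft_apply]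
    rw [show 6 * (1 - l) ^ 2 - 6 * (1 - l) = 6 * l ^ 2 - 6 * l by ring,
      zpow_sub₀ (by norm_num), zpow_one, div_eq_mul_inv, ← inv_zpow]
    norm_num
  exact self_eq_neg.mp h

/-- The quintuple product identity in base `q = y²`. Multiplying the triple products for
`(-z;q)(-q/z;q)(q;q)` and `(qz²;q²)(q/z²;q²)(q²;q²)`, the coefficient of `z^N` is a theta series
which, after a shift of the summation index, depends only on `N` modulo `3` up to a sign and a power
of `q`: it is `(q²;q²)_∞` times such a factor for `N ≡ 0, 1`, and vanishes by antisymmetry for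
`N ≡ 2`. -/
theorem quintuple {y z : ℂ} (hy0 : y ≠ 0) (hy : ‖y‖ < 1) (hz : z ≠ 0) :
    ∑' k : ℤ, (-1) ^ k * y ^ (3 * k ^ 2 - k) * z ^ (3 * k)
      + ∑' k : ℤ, (-1) ^ k * y ^ (3 * k ^ 2 + k) * z ^ (3 * k + 1)
    = qPochInf (-z) (y ^ 2) * qPochInf (-(y ^ 2 / z)) (y ^ 2) * qPochInf (y ^ 2) (y ^ 2)
      * (qPochInf (y ^ 2 * z ^ 2) ((y ^ 2) ^ 2) * qPochInf (y ^ 2 / z ^ 2) ((y ^ 2) ^ 2)) := by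
  have hy2 := norm_pow_lt_one hy two_ne_zero
  have hy20 := pow_ne_zero 2 hy0
  have hzy : z / y ≠ 0 := div_ne_zero hz hy0
  have hz2 : -z ^ 2 ≠ 0 := neg_ne_zero.mpr (pow_ne_zero 2 hz)
  have hA := jacobi_triple hy0 hy hzy
  have hB := jacobi_triple hy20 hy2 hz2
  have hAs := summable_norm_theta hy0 hy hzy
  have hBs := summable_norm_theta hy20 hy2 hz2
  have hE : ∑' l : ℤ, (-1 : ℂ) ^ l * y ^ (6 * l ^ 2 - 2 * l)
      = qPochInf ((y ^ 2) ^ 2) ((y ^ 2) ^ 2) := by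
    rw [← pentagonal_theorem hy20 hy2]
    refine tsum_congr fun l => ?_
    rw [← zpow_natCast, ← zpow_mul]
    congr 2; push_cast; ring
  have hE' : ∑' l : ℤ, (-1 : ℂ) ^ l * y ^ (6 * l ^ 2 + 2 * l)
      = qPochInf ((y ^ 2) ^ 2) ((y ^ 2) ^ 2) := by
    rw [← hE, ← (Equiv.neg ℤ).tsum_eq]
    refine tsum_congr fun l => ?_
    simp only [Equiv.neg_apply]
    rw [zpow_neg, ← inv_zpow]
    norm_num [sub_eq_add_neg]
  have hEne : qPochInf ((y ^ 2) ^ 2) ((y ^ 2) ^ 2) ≠ 0 :=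
    qPochInf_ne_zero (norm_pow_lt_one hy2 two_ne_zero) (norm_pow_lt_one hy2 two_ne_zero)
  have hprod := tsum_mul_tsum_of_summable_norm hAs hBs
  have hsum := summable_mul_of_summable_norm hAs hBs
  simp only [quintuple_term hy0 hz] at hprod hsum
  -- Reindex by the total exponent `N = a + 2b` of `z`, so that the inner sum is its coefficient.
  let e : ℤ × ℤ ≃ ℤ × ℤ :=
    { toFun := fun p => (p.1 - 2 * p.2, p.2)
      invFun := fun p => (p.1 + 2 * p.2, p.2)
      left_inv := fun p => by ext <;> simp
      right_inv := fun p => by ext <;> simp }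
  let F : ℤ → ℤ → ℂ := fun N m =>
    (-1) ^ m * y ^ ((N - 2 * m) ^ 2 - (N - 2 * m) + 2 * m ^ 2) * z ^ N
  have hF : ∀ p : ℤ × ℤ, (-1) ^ (e p).2 * y ^ ((e p).1 ^ 2 - (e p).1 + 2 * (e p).2 ^ 2)
      * z ^ ((e p).1 + 2 * (e p).2) = F p.1 p.2 := fun p => by simp [e, F]
  have hsum' : Summable fun p : ℤ × ℤ => F p.1 p.2 := (e.summable_iff.mpr hsum).congr
    hF
  rw [← e.tsum_eq, tsum_congr hF, hsum'.tsum_prod, tsum_int_residue 3 hsum'.prod,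
    Fin.sum_univ_three] at hprod
  have hm1 : (-1 : ℂ) ≠ 0 := by norm_num
  have h0 : ∀ k : ℤ, ∑' m : ℤ, F (k * (3 : ℕ) + ((0 : Fin 3) : ℕ)) m
      = qPochInf ((y ^ 2) ^ 2) ((y ^ 2) ^ 2)
        * ((-1) ^ k * y ^ (3 * k ^ 2 - k) * z ^ (3 * k)) := by
    intro k
    rw [← hE', ← tsum_mul_right, ← (Equiv.addRight k).tsum_eq]
    refine tsum_congr fun l => ?_
    simp only [F, Equiv.coe_addRight, Fin.val_zero]
    rw [show (k * (3 : ℕ) + (0 : ℕ) - 2 * (l + k)) ^ 2 - (k * (3 : ℕ) + (0 : ℕ) - 2 * (l + k))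
          + 2 * (l + k) ^ 2 = (6 * l ^ 2 + 2 * l) + (3 * k ^ 2 - k) by push_cast; ring,
      show k * (3 : ℕ) + (0 : ℕ) = 3 * k by push_cast; ring, zpow_add₀ hy0, zpow_add₀ hm1]
    ring
  have h1 : ∀ k : ℤ, ∑' m : ℤ, F (k * (3 : ℕ) + ((1 : Fin 3) : ℕ)) m
      = qPochInf ((y ^ 2) ^ 2) ((y ^ 2) ^ 2)
        * ((-1) ^ k * y ^ (3 * k ^ 2 + k) * z ^ (3 * k + 1)) := by
    intro k
    rw [← hE, ← tsum_mul_right, ← (Equiv.addRight k).tsum_eq]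
    refine tsum_congr fun l => ?_
    simp only [F, Equiv.coe_addRight, Fin.val_one]
    rw [show (k * (3 : ℕ) + (1 : ℕ) - 2 * (l + k)) ^ 2 - (k * (3 : ℕ) + (1 : ℕ) - 2 * (l + k))
          + 2 * (l + k) ^ 2 = (6 * l ^ 2 - 2 * l) + (3 * k ^ 2 + k) by push_cast; ring,
      show k * (3 : ℕ) + (1 : ℕ) = 3 * k + 1 by push_cast; ring, zpow_add₀ hy0, zpow_add₀ hm1]
    ring
  have h2 : ∀ k : ℤ, ∑' m : ℤ, F (k * (3 : ℕ) + ((2 : Fin 3) : ℕ)) m = 0 := by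
    intro k
    rw [← zero_mul ((-1) ^ k * y ^ (3 * k ^ 2 + 3 * k + 2) * z ^ (3 * k + 2)),
      ← tsum_odd_eq_zero (y := y), ← tsum_mul_right, ← (Equiv.addRight k).tsum_eq]
    refine tsum_congr fun l => ?_
    simp only [F, Equiv.coe_addRight, Fin.val_two]
    rw [show (k * (3 : ℕ) + (2 : ℕ) - 2 * (l + k)) ^ 2 - (k * (3 : ℕ) + (2 : ℕ) - 2 * (l + k))
          + 2 * (l + k) ^ 2 = (6 * l ^ 2 - 6 * l) + (3 * k ^ 2 + 3 * k + 2) by push_cast; ring,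
      show k * (3 : ℕ) + (2 : ℕ) = 3 * k + 2 by push_cast; ring,
      zpow_add₀ hy0 (6 * l ^ 2 - 6 * l), zpow_add₀ hm1]
    ring
  simp only [h0, h1, h2, tsum_mul_left, tsum_zero, add_zero] at hprod
  rw [hA, hB, ← mul_add] at hprod
  refine mul_left_cancel₀ hEne (hprod.symm.trans ?_)
  rw [show -(y * (z / y)) = -z by field_simp, show -(y / (z / y)) = -(y ^ 2 / z) by field_simp,
    show -(y ^ 2 * -z ^ 2) = y ^ 2 * z ^ 2 by ring,
    show -(y ^ 2 / -z ^ 2) = y ^ 2 / z ^ 2 by field_simp]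
  ring

/-! ### Extraction of the residue class `4` modulo `5` -/

/-- Averaging over fifth roots of unity isolates the exponents congruent to `4` modulo `5`. -/
lemma sum_rootsOfUnity_tsum {ι : Type*} (s : ι → ℂ) (e : ι → ℕ) (x : ℂ) {ζ : ℂ}
    (hζ : IsPrimitiveRoot ζ 5) (hs : Summable fun i => s i * x ^ e i) :
    ∑ j ∈ range 5, ζ ^ j * ∑' i, s i * (ζ ^ j * x) ^ e i
      = 5 * ∑' i, if e i % 5 = 4 then s i * x ^ e i else 0 := by
  have hn : ‖ζ‖ = 1 := hζ.norm'_eq_one (by norm_num)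
  have hs' : ∀ j ∈ range 5, Summable fun i => ζ ^ j * (s i * (ζ ^ j * x) ^ e i) := by
    intro j _
    refine Summable.mul_left _ (Summable.of_norm ?_)
    simpa [hn, norm_mul, norm_pow] using hs.norm
  simp only [← tsum_mul_left]
  rw [← Summable.tsum_finsetSum hs']
  refine tsum_congr fun i => ?_
  have h1 : ∀ j ∈ range 5, ζ ^ j * (s i * (ζ ^ j * x) ^ e i)
      = s i * x ^ e i * (ζ ^ (e i + 1)) ^ j := by
    intro j _
    rw [mul_pow, ← pow_mul, ← pow_mul, mul_comm j, add_mul, pow_add, one_mul]; ring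
  rw [sum_congr rfl h1, ← mul_sum]
  split_ifs with h
  · rw [(hζ.pow_eq_one_iff_dvd _).mpr (by omega)]
    simp; ring
  · have hne : ζ ^ (e i + 1) ≠ 1 := fun h' => h (by
      have := (hζ.pow_eq_one_iff_dvd _).mp h'; omega)
    have hg := mul_geom_sum (ζ ^ (e i + 1)) 5
    rw [← pow_mul, mul_comm _ 5, pow_mul, hζ.pow_eq_one, one_pow, sub_self] at hg
    rw [(mul_eq_zero.mp hg).resolve_left (sub_ne_zero.mpr hne), mul_zero, mul_zero]

lemma natAbs_sq_mod_five (n : ℤ) :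
    (n % 5 = 0 ∧ n.natAbs ^ 2 % 5 = 0) ∨ (n % 5 = 1 ∧ n.natAbs ^ 2 % 5 = 1) ∨
    (n % 5 = 2 ∧ n.natAbs ^ 2 % 5 = 4) ∨ (n % 5 = 3 ∧ n.natAbs ^ 2 % 5 = 4) ∨
    (n % 5 = 4 ∧ n.natAbs ^ 2 % 5 = 1) := by
  have h : ((n.natAbs ^ 2 : ℕ) : ℤ) = n ^ 2 := by push_cast; exact sq_abs n
  obtain ⟨k, r, hr, rfl⟩ : ∃ k r : ℤ, (r = 0 ∨ r = 1 ∨ r = 2 ∨ r = 3 ∨ r = 4) ∧ n = 5 * k + r :=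
    ⟨n / 5, n % 5, by omega, by omega⟩
  have h2 : (5 * k + r) ^ 2 = 5 * (5 * k ^ 2 + 2 * k * r) + r ^ 2 := by ring
  rw [h2] at h
  rcases hr with rfl | rfl | rfl | rfl | rfl <;> omega

lemma pentagonal_mod_five (n : ℤ) :
    (n % 5 = 0 ∧ pentagonal n % 5 = 0) ∨ (n % 5 = 1 ∧ pentagonal n % 5 = 1) ∨
    (n % 5 = 2 ∧ pentagonal n % 5 = 0) ∨ (n % 5 = 3 ∧ pentagonal n % 5 = 2) ∨
    (n % 5 = 4 ∧ pentagonal n % 5 = 2) := by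
  have h := two_mul_natCast_pentagonal n
  obtain ⟨k, r, hr, rfl⟩ : ∃ k r : ℤ, (r = 0 ∨ r = 1 ∨ r = 2 ∨ r = 3 ∨ r = 4) ∧ n = 5 * k + r :=
    ⟨n / 5, n % 5, by omega, by omega⟩
  have h2 : (5 * k + r) * (3 * (5 * k + r) - 1)
      = 5 * (15 * k ^ 2 + 6 * k * r - k) + r * (3 * r - 1) := by ring
  rw [h2] at h
  rcases hr with rfl | rfl | rfl | rfl | rfl <;> omega

lemma zpow_sq_eq (x : ℂ) (n : ℤ) : x ^ (n ^ 2) = x ^ (n.natAbs ^ 2) := by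
  rw [← zpow_natCast]; congr 1; push_cast; exact (sq_abs n).symm

lemma zpow_pentagonal {y : ℂ} (n : ℤ) : y ^ (3 * n ^ 2 - n) = (y ^ 2) ^ pentagonal n := by
  rw [← zpow_natCast, ← zpow_natCast, ← zpow_mul]
  congr 1
  have := two_mul_natCast_pentagonal n
  push_cast
  linear_combination -this

lemma summable_norm_theta4 {x : ℂ} (hx0 : x ≠ 0) (hx : ‖x‖ < 1) :
    Summable fun n : ℤ => ‖(-1 : ℂ) ^ n * x ^ (n.natAbs ^ 2)‖ := by
  refine (summable_norm_theta hx0 hx (neg_ne_zero.mpr one_ne_zero)).congr fun n => ?_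
  rw [zpow_sq_eq, mul_comm]

lemma theta4_eq_tsum (x : ℂ) : theta4 x = ∑' n : ℤ, (-1 : ℂ) ^ n * x ^ (n.natAbs ^ 2) :=
  tsum_congr fun n => by rw [zpow_sq_eq]

lemma exists_sqrt {x : ℂ} (hx0 : x ≠ 0) (hx : ‖x‖ < 1) : ∃ y : ℂ, y ≠ 0 ∧ ‖y‖ < 1 ∧ y ^ 2 = x := by
  obtain ⟨y, hy⟩ := IsAlgClosed.exists_pow_nat_eq x two_pos
  refine ⟨y, ?_, ?_, hy⟩
  · rintro rfl; exact hx0 (by simpa using hy.symm)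
  · rw [← hy, norm_pow] at hx
    exact (pow_lt_one_iff_of_nonneg (norm_nonneg _) two_ne_zero).mp hx

lemma summable_norm_euler {x : ℂ} (hx0 : x ≠ 0) (hx : ‖x‖ < 1) :
    Summable fun n : ℤ => ‖(-1 : ℂ) ^ n * x ^ pentagonal n‖ := by
  obtain ⟨y, hy0, hy, rfl⟩ := exists_sqrt hx0 hx
  simpa only [zpow_pentagonal] using summable_norm_pentagonal hy0 hy

lemma euler_eq_tsum {x : ℂ} (hx0 : x ≠ 0) (hx : ‖x‖ < 1) :
    qPochInf x x = ∑' n : ℤ, (-1 : ℂ) ^ n * x ^ pentagonal n := by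
  obtain ⟨y, hy0, hy, rfl⟩ := exists_sqrt hx0 hx
  rw [← pentagonal_theorem hy0 hy]
  simp only [zpow_pentagonal]

/-- The expansion of `θ₄(x) E(x)` as a double series. -/
lemma theta4_mul_euler {x : ℂ} (hx0 : x ≠ 0) (hx : ‖x‖ < 1) :
    (Summable fun p : ℤ × ℤ =>
      ((-1 : ℂ) ^ p.1 * (-1) ^ p.2) * x ^ (p.1.natAbs ^ 2 + pentagonal p.2)) ∧
    theta4 x * qPochInf x x = ∑' p : ℤ × ℤ,
      ((-1 : ℂ) ^ p.1 * (-1) ^ p.2) * x ^ (p.1.natAbs ^ 2 + pentagonal p.2) := by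
  have h1 := summable_mul_of_summable_norm (summable_norm_theta4 hx0 hx) (summable_norm_euler hx0 hx)
  have h2 := tsum_mul_tsum_of_summable_norm (summable_norm_theta4 hx0 hx)
    (summable_norm_euler hx0 hx)
  have h3 : ∀ p : ℤ × ℤ, (-1 : ℂ) ^ p.1 * x ^ (p.1.natAbs ^ 2) * ((-1) ^ p.2 * x ^ pentagonal p.2)
      = ((-1 : ℂ) ^ p.1 * (-1) ^ p.2) * x ^ (p.1.natAbs ^ 2 + pentagonal p.2) := fun p => by
    rw [pow_add]; ring
  rw [theta4_eq_tsum, euler_eq_tsum hx0 hx, h2]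
  exact ⟨h1.congr h3, tsum_congr h3⟩

/-- The part of `θ₄(x) E(x)` with exponents `≡ 4 (mod 5)` factors: squares are `0, 1, 4` and
pentagonal numbers are `0, 1, 2` modulo `5`, so `4` arises only as `4 + 0`. -/
lemma tsum_mod_four_eq_mul {x : ℂ} (hx0 : x ≠ 0) (hx : ‖x‖ < 1) :
    ∑' p : ℤ × ℤ, (if (p.1.natAbs ^ 2 + pentagonal p.2) % 5 = 4 then
      ((-1 : ℂ) ^ p.1 * (-1) ^ p.2) * x ^ (p.1.natAbs ^ 2 + pentagonal p.2) else 0)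
    = (∑' n : ℤ, if n.natAbs ^ 2 % 5 = 4 then (-1 : ℂ) ^ n * x ^ (n.natAbs ^ 2) else 0)
      * ∑' n : ℤ, if pentagonal n % 5 = 0 then (-1 : ℂ) ^ n * x ^ pentagonal n else 0 := by
  rw [tsum_mul_tsum_of_summable_norm]
  · refine tsum_congr fun p => ?_
    have h1 := natAbs_sq_mod_five p.1
    have h2 := pentagonal_mod_five p.2
    by_cases h3 : p.1.natAbs ^ 2 % 5 = 4 <;> by_cases h4 : pentagonal p.2 % 5 = 0
    · rw [if_pos (by omega), if_pos h3, if_pos h4, pow_add]; ring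
    · rw [if_neg (by omega), if_neg h4, mul_zero]
    · rw [if_neg (by omega), if_neg h3, zero_mul]
    · rw [if_neg (by omega), if_neg h3, zero_mul]
  · refine (summable_norm_theta4 hx0 hx).of_nonneg_of_le (fun _ => norm_nonneg _) fun n => ?_
    split_ifs
    · exact le_rfl
    · rw [norm_zero]; exact norm_nonneg _
  · refine (summable_norm_euler hx0 hx).of_nonneg_of_le (fun _ => norm_nonneg _) fun n => ?_
    split_ifs
    · exact le_rfl
    · rw [norm_zero]; exact norm_nonneg _

/-- `(-1)^{5k+r} = (-1)^k (-1)^r`. -/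
lemma neg_one_zpow_five (k r : ℤ) : (-1 : ℂ) ^ (k * 5 + r) = (-1) ^ k * (-1) ^ r := by
  rw [zpow_add₀ (by norm_num), mul_comm k, zpow_mul]
  norm_num

/-- The terms of `θ₄(x)` with exponent `≡ 4 (mod 5)` come from `n ≡ ±2 (mod 5)`; both classes
give the same theta series. -/
lemma theta4_part {x : ℂ} (hx0 : x ≠ 0) (hx : ‖x‖ < 1) :
    ∑' n : ℤ, (if n.natAbs ^ 2 % 5 = 4 then (-1 : ℂ) ^ n * x ^ (n.natAbs ^ 2) else 0)
      = 2 * x ^ 4 * Jba 10 1 (x ^ 5) := by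
  have hs : Summable fun n : ℤ =>
      if n.natAbs ^ 2 % 5 = 4 then (-1 : ℂ) ^ n * x ^ (n.natAbs ^ 2) else 0 := by
    refine (summable_norm_theta4 hx0 hx).of_norm_bounded fun n => ?_
    split_ifs
    · exact le_rfl
    · rw [norm_zero]; exact norm_nonneg _
  have h2 : ∑' k : ℤ, (-1 : ℂ) ^ (k * 5 + 2) * x ^ ((k * 5 + 2) ^ 2) = x ^ 4 * Jba 10 1 (x ^ 5) := by
    have hq0 := pow_ne_zero 5 hx0
    have hq := norm_pow_lt_one hx (n := 5) (by norm_num)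
    have h := jacobi_triple (y := (x ^ 5) ^ 5) (v := -(x ^ 5) ^ 4) (pow_ne_zero 5 hq0)
      (norm_pow_lt_one hq (by norm_num)) (neg_ne_zero.mpr (pow_ne_zero 4 hq0))
    rw [show -((x ^ 5) ^ 5 * -(x ^ 5) ^ 4) = (x ^ 5) ^ (10 - 1) by ring,
      show -((x ^ 5) ^ 5 / -(x ^ 5) ^ 4) = (x ^ 5) ^ 1 by field_simp,
      show ((x ^ 5) ^ 5) ^ 2 = (x ^ 5) ^ 10 by ring] at h
    rw [Jba, mul_comm (qPochInf ((x ^ 5) ^ 1) _), ← h, ← tsum_mul_left]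
    refine tsum_congr fun k => ?_
    rw [neg_one_zpow_five, neg_eq_neg_one_mul ((x ^ 5) ^ 4), mul_zpow]
    simp only [← pow_mul]
    rw [← zpow_natCast x (5 * 5), ← zpow_natCast x (5 * 4), ← zpow_natCast x 4, ← zpow_mul,
      ← zpow_mul, mul_left_comm _ ((-1) ^ k), mul_left_comm _ ((-1) ^ k), ← zpow_add₀ hx0,
      ← zpow_add₀ hx0, zpow_ofNat, neg_one_sq, mul_one]
    congr 2; push_cast; ring
  have h3 : ∑' k : ℤ, (-1 : ℂ) ^ (k * 5 + 3) * x ^ ((k * 5 + 3) ^ 2) = x ^ 4 * Jba 10 1 (x ^ 5) := by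
    rw [← h2, ← (Equiv.subLeft (-1 : ℤ)).tsum_eq]
    refine tsum_congr fun k => ?_
    simp only [Equiv.subLeft_apply]
    rw [show (-1 - k) * 5 + 3 = -(k * 5 + 2) by ring, neg_sq, zpow_neg, ← inv_zpow]
    norm_num
  have hz : ∀ r : ℤ, (r = 0 ∨ r = 1 ∨ r = 4) → ∑' k : ℤ, (if (k * 5 + r).natAbs ^ 2 % 5 = 4 then
      (-1 : ℂ) ^ (k * 5 + r) * x ^ ((k * 5 + r).natAbs ^ 2) else 0) = 0 := by
    intro r hr
    refine (tsum_congr fun k => if_neg ?_).trans tsum_zero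
    have := natAbs_sq_mod_five (k * 5 + r)
    omega
  have hp : ∀ r : ℤ, (r = 2 ∨ r = 3) → ∑' k : ℤ, (if (k * 5 + r).natAbs ^ 2 % 5 = 4 then
      (-1 : ℂ) ^ (k * 5 + r) * x ^ ((k * 5 + r).natAbs ^ 2) else 0)
      = ∑' k : ℤ, (-1 : ℂ) ^ (k * 5 + r) * x ^ ((k * 5 + r) ^ 2) := by
    intro r hr
    refine tsum_congr fun k => ?_
    have := natAbs_sq_mod_five (k * 5 + r)
    rw [if_pos (by omega), zpow_sq_eq]
  rw [tsum_int_residue 5 hs, Fin.sum_univ_five]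
  have e0 := hz 0 (by norm_num)
  have e1 := hz 1 (by norm_num)
  have e2 := (hp 2 (by norm_num)).trans h2
  have e3 := (hp 3 (by norm_num)).trans h3
  have e4 := hz 4 (by norm_num)
  refine (congr_arg₂ (· + ·) (congr_arg₂ (· + ·) (congr_arg₂ (· + ·) (congr_arg₂ (· + ·)
    e0 e1) e2) e3) e4).trans ?_
  ring

/-- The terms of `E(x)` with exponent `≡ 0 (mod 5)` come from `m ≡ 0, 2 (mod 5)`; together they
form a quintuple product in base `q⁵` at `z = q`, where `q = x⁵`. -/
lemma euler_part {x : ℂ} (hx0 : x ≠ 0) (hx : ‖x‖ < 1) :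
    ∑' n : ℤ, (if pentagonal n % 5 = 0 then (-1 : ℂ) ^ n * x ^ pentagonal n else 0)
      = qPochInf (-x ^ 5) ((x ^ 5) ^ 5) * qPochInf (-(x ^ 5) ^ 4) ((x ^ 5) ^ 5)
        * qPochInf ((x ^ 5) ^ 5) ((x ^ 5) ^ 5)
        * (qPochInf ((x ^ 5) ^ 7) (((x ^ 5) ^ 5) ^ 2)
          * qPochInf ((x ^ 5) ^ 3) (((x ^ 5) ^ 5) ^ 2)) := by
  have hs : Summable fun n : ℤ =>
      if pentagonal n % 5 = 0 then (-1 : ℂ) ^ n * x ^ pentagonal n else 0 := by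
    refine (summable_norm_euler hx0 hx).of_norm_bounded fun n => ?_
    split_ifs
    · exact le_rfl
    · rw [norm_zero]; exact norm_nonneg _
  have hz : ∀ r : ℤ, (r = 1 ∨ r = 3 ∨ r = 4) → ∑' k : ℤ, (if pentagonal (k * 5 + r) % 5 = 0 then
      (-1 : ℂ) ^ (k * 5 + r) * x ^ pentagonal (k * 5 + r) else 0) = 0 := by
    intro r hr
    refine (tsum_congr fun k => if_neg ?_).trans tsum_zero
    have := pentagonal_mod_five (k * 5 + r)
    omega
  obtain ⟨w, hw0, hw, rfl⟩ := exists_sqrt hx0 hx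
  have hp : ∀ r : ℤ, (r = 0 ∨ r = 2) → ∑' k : ℤ, (if pentagonal (k * 5 + r) % 5 = 0 then
      (-1 : ℂ) ^ (k * 5 + r) * (w ^ 2) ^ pentagonal (k * 5 + r) else 0)
      = ∑' k : ℤ, (-1 : ℂ) ^ k * w ^ (3 * (k * 5 + r) ^ 2 - (k * 5 + r)) := by
    intro r hr
    refine tsum_congr fun k => ?_
    have := pentagonal_mod_five (k * 5 + r)
    rw [if_pos (by omega), zpow_pentagonal, neg_one_zpow_five]
    rcases hr with rfl | rfl
    · simp
    · rw [zpow_ofNat, neg_one_sq, mul_one]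
  have hQ := quintuple (y := w ^ 25) (z := w ^ 10) (pow_ne_zero _ hw0)
    (norm_pow_lt_one hw (by norm_num)) (pow_ne_zero _ hw0)
  have hq1 : ∑' k : ℤ, (-1 : ℂ) ^ k * (w ^ 25) ^ (3 * k ^ 2 - k) * (w ^ 10) ^ (3 * k)
      = ∑' k : ℤ, (-1 : ℂ) ^ k * w ^ (3 * (k * 5 + 0) ^ 2 - (k * 5 + 0)) := by
    rw [← (Equiv.neg ℤ).tsum_eq]
    refine tsum_congr fun k => ?_
    simp only [Equiv.neg_apply]
    rw [← zpow_natCast, ← zpow_natCast, ← zpow_mul, ← zpow_mul, mul_assoc, ← zpow_add₀ hw0,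
      zpow_neg (-1 : ℂ), ← inv_zpow, show (-1 : ℂ)⁻¹ = -1 by norm_num]
    congr 2; push_cast; ring
  have hq2 : ∑' k : ℤ, (-1 : ℂ) ^ k * (w ^ 25) ^ (3 * k ^ 2 + k) * (w ^ 10) ^ (3 * k + 1)
      = ∑' k : ℤ, (-1 : ℂ) ^ k * w ^ (3 * (k * 5 + 2) ^ 2 - (k * 5 + 2)) := by
    refine tsum_congr fun k => ?_
    rw [← zpow_natCast, ← zpow_natCast, ← zpow_mul, ← zpow_mul, mul_assoc, ← zpow_add₀ hw0]
    congr 2; push_cast; ring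
  rw [hq1, hq2, show -(w ^ 10) = -(w ^ 2) ^ 5 by ring,
    show -((w ^ 25) ^ 2 / w ^ 10) = -((w ^ 2) ^ 5) ^ 4 by field_simp,
    show (w ^ 25) ^ 2 * (w ^ 10) ^ 2 = ((w ^ 2) ^ 5) ^ 7 by ring,
    show (w ^ 25) ^ 2 / (w ^ 10) ^ 2 = ((w ^ 2) ^ 5) ^ 3 by field_simp,
    show (w ^ 25) ^ 2 = ((w ^ 2) ^ 5) ^ 5 by ring] at hQ
  rw [tsum_int_residue 5 hs, Fin.sum_univ_five]
  have e0 := hp 0 (by norm_num)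
  have e1 := hz 1 (by norm_num)
  have e2 := hp 2 (by norm_num)
  have e3 := hz 3 (by norm_num)
  have e4 := hz 4 (by norm_num)
  refine (congr_arg₂ (· + ·) (congr_arg₂ (· + ·) (congr_arg₂ (· + ·) (congr_arg₂ (· + ·)
    e0 e1) e2) e3) e4).trans ?_
  simp only [add_zero] at hQ ⊢
  exact hQ

lemma Jba_ne_zero {a b : ℕ} (ha : a ≠ 0) (hab : a < b) {q : ℂ} (hq : ‖q‖ < 1) : Jba b a q ≠ 0 := by
  have hb := norm_pow_lt_one hq (n := b) (by omega)
  exact mul_ne_zero (mul_ne_zero (qPochInf_ne_zero hb (norm_pow_lt_one hq ha))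
    (qPochInf_ne_zero hb (norm_pow_lt_one hq (by omega)))) (qPochInf_ne_zero hb hb)

/-- The quintuple product of `euler_part` equals `J₅ J_{5,2} / J_{5,1}`. -/
lemma quintuple_mul_J51 {q : ℂ} (hq : ‖q‖ < 1) :
    qPochInf (-q) (q ^ 5) * qPochInf (-q ^ 4) (q ^ 5) * qPochInf (q ^ 5) (q ^ 5)
        * (qPochInf (q ^ 7) ((q ^ 5) ^ 2) * qPochInf (q ^ 3) ((q ^ 5) ^ 2)) * Jba 5 1 q
      = Jb 5 q * Jba 5 2 q := by
  have h5 := norm_pow_lt_one hq (n := 5) (by norm_num)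
  have h1 := qPochInf_mul_neg q h5
  have h2 := qPochInf_mul_neg (q ^ 4) h5
  have h3 := qPochInf_even_odd (q ^ 2) h5
  have h4 := qPochInf_even_odd (q ^ 3) h5
  rw [show q ^ 2 * q ^ 5 = q ^ 7 by ring] at h3
  rw [show q ^ 3 * q ^ 5 = q ^ 8 by ring] at h4
  rw [show (q ^ 4) ^ 2 = q ^ 8 by ring] at h2
  rw [Jba, Jba, Jb, pow_one, show 5 - 1 = 4 from rfl, show 5 - 2 = 3 from rfl, ← h3, ← h4, ← h1,
    ← h2]
  ring

/-! ### The power series `∑ a(n) q^n` -/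

/-- A series representing `θ₄ E` on the unit disc converges there: at a real point of `(0,1)` its
sum is nonzero, hence is not the default value of a divergent series. -/
lemma summable_coeff {a : ℕ → ℂ}
    (ha : ∀ q : ℂ, ‖q‖ < 1 → theta4 q * qPochInf q q = ∑' n : ℕ, a n * q ^ n)
    {x : ℂ} (hx : ‖x‖ < 1) : Summable fun n => a n * x ^ n := by
  obtain ⟨r, hxr, hr1⟩ := exists_between hx
  have hr0 : 0 < r := (norm_nonneg x).trans_lt hxr
  have hn : ‖(r : ℂ)‖ = r := by rw [Complex.norm_real, Real.norm_of_nonneg hr0.le]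
  have hrc : (r : ℂ) ≠ 0 := by exact_mod_cast hr0.ne'
  have hr : ‖(r : ℂ)‖ < 1 := by rw [hn]; exact hr1
  have hne : ∑' n : ℕ, a n * (r : ℂ) ^ n ≠ 0 := by
    rw [← ha _ hr]
    exact mul_ne_zero (theta4_ne_zero hrc hr) (qPochInf_ne_zero hr hr)
  have hs : Summable fun n => a n * (r : ℂ) ^ n := by
    by_contra h
    exact hne (tsum_eq_zero_of_not_summable h)
  exact summable_powerSeries_of_norm_lt hs.hasSum.tendsto_sum_nat.cauchySeq (by rw [hn]; exact hxr)

/-- The identity on the punctured disc. With `q = x⁵`, both the power series and the double series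
for `θ₄ E` are averaged over the points `ζ^j x`, which compares their parts of exponent
`≡ 4 (mod 5)` without appeal to the uniqueness of power series coefficients. -/
lemma main_of_ne_zero {a : ℕ → ℂ}
    (ha : ∀ q : ℂ, ‖q‖ < 1 → theta4 q * qPochInf q q = ∑' n : ℕ, a n * q ^ n)
    {q : ℂ} (hq0 : q ≠ 0) (hq : ‖q‖ < 1) :
    ∑' n : ℕ, a (5 * n + 4) * q ^ n = 2 * Jb 5 q * Jba 5 2 q * Jba 10 1 q / Jba 5 1 q := by
  obtain ⟨x, hx5⟩ := IsAlgClosed.exists_pow_nat_eq q (show 0 < 5 by norm_num)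
  have hx0 : x ≠ 0 := by rintro rfl; exact hq0 (by simpa using hx5.symm)
  have hx : ‖x‖ < 1 := by
    rw [← hx5, norm_pow] at hq
    exact (pow_lt_one_iff_of_nonneg (norm_nonneg _) (by norm_num)).mp hq
  have hζ := Complex.isPrimitiveRoot_exp 5 (by norm_num)
  set ζ := Complex.exp (2 * Real.pi * Complex.I / (5 : ℕ))
  have hζn : ‖ζ‖ = 1 := hζ.norm'_eq_one (by norm_num)
  have hζ0 : ζ ≠ 0 := hζ.ne_zero (by norm_num)
  have hA := sum_rootsOfUnity_tsum a id x hζ (summable_coeff ha hx)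
  have hB := sum_rootsOfUnity_tsum (fun p : ℤ × ℤ => (-1 : ℂ) ^ p.1 * (-1) ^ p.2)
    (fun p => p.1.natAbs ^ 2 + pentagonal p.2) x hζ (theta4_mul_euler hx0 hx).1
  have hAB : ∀ j ∈ range 5, ζ ^ j * ∑' n, a n * (ζ ^ j * x) ^ id n
      = ζ ^ j * ∑' p : ℤ × ℤ, ((-1 : ℂ) ^ p.1 * (-1) ^ p.2)
        * (ζ ^ j * x) ^ (p.1.natAbs ^ 2 + pentagonal p.2) := by
    intro j _
    have hj : ‖ζ ^ j * x‖ < 1 := by rw [norm_mul, norm_pow, hζn, one_pow, one_mul]; exact hx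
    rw [← (theta4_mul_euler (mul_ne_zero (pow_ne_zero j hζ0) hx0) hj).2, ha _ hj]
    rfl
  rw [sum_congr rfl hAB, hB, tsum_mod_four_eq_mul hx0 hx, theta4_part hx0 hx, euler_part hx0 hx]
    at hA
  have hL : ∑' n : ℕ, (if id n % 5 = 4 then a n * x ^ id n else 0)
      = x ^ 4 * ∑' n : ℕ, a (5 * n + 4) * q ^ n := by
    have hinj : Function.Injective fun n : ℕ => 5 * n + 4 := fun m n h => by
      simp only at h; omega
    rw [← hinj.tsum_eq, ← tsum_mul_left]
    · refine tsum_congr fun n => ?_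
      simp only [id]
      rw [if_pos (by omega), ← hx5]
      ring
    · intro n hn
      by_contra h
      refine hn (if_neg fun h4 => h ⟨n / 5, ?_⟩)
      simp only [id] at h4 ⊢
      omega
  rw [hL, hx5] at hA
  have hJ := quintuple_mul_J51 hq
  rw [eq_div_iff (Jba_ne_zero one_ne_zero (by norm_num) hq)]
  refine mul_left_cancel₀ (mul_ne_zero (by norm_num : (5 : ℂ) ≠ 0) (pow_ne_zero 4 hx0)) ?_
  linear_combination (-Jba 5 1 q) * hA + 10 * x ^ 4 * Jba 10 1 q * hJ

/-! ### Continuity at the origin -/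

lemma tendsto_qPochInf_zero {a b : ℕ} (hb : b ≠ 0) :
    Tendsto (fun q : ℂ => qPochInf (q ^ a) (q ^ b)) (𝓝 0) (𝓝 (qPochInf (0 ^ a) (0 ^ b))) := by
  simp only [qPochInf, sub_eq_add_neg]
  refine tendsto_tprod_one_add_of_dominated_convergence
    (summable_geometric_of_lt_one (r := 1 / 2) (by norm_num) (by norm_num)) (fun k => ?_) ?_
  · exact Continuous.tendsto (f := fun q : ℂ => -(q ^ a * (q ^ b) ^ k)) (by fun_prop) 0
  · filter_upwards [Metric.closedBall_mem_nhds (0 : ℂ) (show (0 : ℝ) < 1 / 2 by norm_num)]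
      with q hq k
    rw [mem_closedBall_zero_iff] at hq
    have h1 : ‖q‖ ≤ 1 := hq.trans (by norm_num)
    have h2 : ‖q‖ ^ b ≤ 1 / 2 := (pow_le_of_le_one (norm_nonneg _) h1 hb).trans hq
    rw [norm_neg, norm_mul, norm_pow, norm_pow, norm_pow]
    calc ‖q‖ ^ a * (‖q‖ ^ b) ^ k ≤ 1 * (1 / 2) ^ k := by
          gcongr
          exact pow_le_one₀ (norm_nonneg _) h1
      _ = (1 / 2) ^ k := one_mul _

lemma tendsto_Jba_zero {a b : ℕ} (hb : b ≠ 0) :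
    Tendsto (fun q : ℂ => Jba b a q) (𝓝 0) (𝓝 (Jba b a 0)) :=
  ((tendsto_qPochInf_zero hb).mul (tendsto_qPochInf_zero hb)).mul (tendsto_qPochInf_zero hb)

lemma tendsto_series_zero {a : ℕ → ℂ} (hs : ∀ x : ℂ, ‖x‖ < 1 → Summable fun n => a n * x ^ n) :
    Tendsto (fun q : ℂ => ∑' n : ℕ, a (5 * n + 4) * q ^ n) (𝓝 0)
      (𝓝 (∑' n : ℕ, a (5 * n + 4) * 0 ^ n)) := by
  have hinj : Function.Injective fun n : ℕ => 5 * n + 4 := fun m n h => by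
    simp only at h; omega
  have h1 := ((hs (1 / 2) (by norm_num)).comp_injective hinj).norm.mul_left (2 ^ 4)
  refine tendsto_tsum_of_dominated_convergence h1 (fun k => ?_) ?_
  · exact Continuous.tendsto (f := fun q : ℂ => a (5 * k + 4) * q ^ k) (by fun_prop) 0
  · filter_upwards [Metric.closedBall_mem_nhds (0 : ℂ) (show (0 : ℝ) < (1 / 2) ^ 5 by norm_num)]
      with q hq k
    rw [mem_closedBall_zero_iff] at hq
    simp only [Function.comp, norm_mul, norm_pow, norm_div, norm_one, Complex.norm_ofNat]
    calc ‖a (5 * k + 4)‖ * ‖q‖ ^ k ≤ ‖a (5 * k + 4)‖ * ((1 / 2) ^ 5) ^ k := by gcongr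
      _ = 2 ^ 4 * (‖a (5 * k + 4)‖ * (1 / 2) ^ (5 * k + 4)) := by
          rw [pow_add, pow_mul]; ring

theorem U54_theta4_euler (a : ℕ → ℂ)
    (ha : ∀ q : ℂ, ‖q‖ < 1 → theta4 q * qPochInf q q = ∑' n : ℕ, a n * q ^ n) :
    ∀ q : ℂ, ‖q‖ < 1 →
      ∑' n : ℕ, a (5 * n + 4) * q ^ n = 2 * Jb 5 q * Jba 5 2 q * Jba 10 1 q / Jba 5 1 q := by
  intro q hq
  rcases ne_or_eq q 0 with hq0 | rfl
  · exact main_of_ne_zero ha hq0 hq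
  -- At `q = 0` both sides are continuous, so the identity extends from the punctured disc.
  have hL := tendsto_series_zero (a := a) fun x hx => summable_coeff ha hx
  have hR : Tendsto (fun q : ℂ => 2 * Jb 5 q * Jba 5 2 q * Jba 10 1 q / Jba 5 1 q) (𝓝 0)
      (𝓝 (2 * Jb 5 0 * Jba 5 2 0 * Jba 10 1 0 / Jba 5 1 0)) :=
    ((((tendsto_qPochInf_zero (by norm_num)).const_mul 2).mul (tendsto_Jba_zero (by norm_num))).mul
      (tendsto_Jba_zero (by norm_num))).div (tendsto_Jba_zero (by norm_num))
      (Jba_ne_zero one_ne_zero (by norm_num) hq)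
  refine tendsto_nhds_unique (f := fun q : ℂ => ∑' n : ℕ, a (5 * n + 4) * q ^ n) (l := 𝓝[≠] 0)
    (hL.mono_left nhdsWithin_le_nhds) ((hR.mono_left nhdsWithin_le_nhds).congr' ?_)
  filter_upwards [self_mem_nhdsWithin,
    nhdsWithin_le_nhds (Metric.ball_mem_nhds (0 : ℂ) one_pos)] with t ht0 ht
  exact (main_of_ne_zero ha ht0 (mem_ball_zero_iff.mp ht)).symm
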